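/- (The moving vortex is an exact steady solution.) Let g > 0 and v_max, B_max, h_max be real numbers, and define on ℝ² the fields h(x,y) := h_max − (v_max² − B_max²)·e^{1−x²−y²}/(2g), (vx,vy)(x,y) := v_max·e^{(1−x²−y²)/2}·(−y, x), (Bx,By)(x,y) := B_max·e^{(1−x²−y²)/2}·(−y, x). Then these fields satisfy the steady 2D shallow water MHD equations with flat bottom: ∂ₓ(h·vx) + ∂_y(h·vy) = 0; ∂ₓ(h·vx² − h·Bx² + ½g·h²) + ∂_y(h·vx·vy − h·Bx·By) = 0; ∂ₓ(h·vx·vy − h·Bx·By) + ∂_y(h·vy² − h·By² + ½g·h²) = 0; ∂_y(h·(vy·Bx − By·vx)) = 0; ∂ₓ(h·(vx·By − Bx·vy)) = 0; and the divergence-free condition ∂ₓ(h·Bx) + ∂_y(h·By) = 0. -/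

import Mathlib

noncomputable section

/-- Water height of the vortex. -/
def vH (g vmax Bmax hmax : ℝ) (x y : ℝ) : ℝ :=
  hmax - (vmax ^ 2 - Bmax ^ 2) * Real.exp (1 - x ^ 2 - y ^ 2) / (2 * g)

/-- x-velocity of the vortex. -/
def vVX (vmax : ℝ) (x y : ℝ) : ℝ := vmax * Real.exp ((1 - x ^ 2 - y ^ 2) / 2) * (-y)

/-- y-velocity of the vortex. -/
def vVY (vmax : ℝ) (x y : ℝ) : ℝ := vmax * Real.exp ((1 - x ^ 2 - y ^ 2) / 2) * x

/-- x-magnetic field of the vortex. -/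
def vBX (Bmax : ℝ) (x y : ℝ) : ℝ := Bmax * Real.exp ((1 - x ^ 2 - y ^ 2) / 2) * (-y)

/-- y-magnetic field of the vortex. -/
def vBY (Bmax : ℝ) (x y : ℝ) : ℝ := Bmax * Real.exp ((1 - x ^ 2 - y ^ 2) / 2) * x

/-! In polar coordinates the flow is a rotation whose speed, like the depth, depends only on
`s = x² + y²`. Such a field is tangent to the circles on which its coefficient is constant, so it is
divergence-free, which gives mass conservation and `∇ · (hB) = 0`. Velocity and magnetic field are
parallel, so the induction flux vanishes. The only real condition is the radial balance of
centripetal force, magnetic tension and pressure gradient: with `v = a(s)(-y, x)`,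
`B = b(s)(-y, x)` and `h = H(s)` it reads `2 g H' = a² - b²`. -/

/-- The planar flux `(F, G)` has partial derivatives `∂ₓF` and `∂_yG` at `(x, y)`, and they add up
to zero. Existence is part of the notion, since `deriv` vanishes where there is no derivative. -/
def HasZeroDivergenceAt (F G : ℝ → ℝ → ℝ) (x y : ℝ) : Prop :=
  ∃ d, HasDerivAt (fun x' => F x' y) d x ∧ HasDerivAt (fun y' => G x y') (-d) y

/-- The steady shallow water MHD equations over a flat bottom at the point `(x, y)`. The induction
fluxes have a single nonzero component, so those two equations are ordinary derivatives. -/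
structure IsSteadyShallowWaterMHDAt (g : ℝ) (h vx vy Bx By : ℝ → ℝ → ℝ) (x y : ℝ) : Prop where
  mass : HasZeroDivergenceAt (fun x y => h x y * vx x y) (fun x y => h x y * vy x y) x y
  momentum_x : HasZeroDivergenceAt
    (fun x y => h x y * vx x y ^ 2 - h x y * Bx x y ^ 2 + g * h x y ^ 2 / 2)
    (fun x y => h x y * vx x y * vy x y - h x y * Bx x y * By x y) x y
  momentum_y : HasZeroDivergenceAt
    (fun x y => h x y * vx x y * vy x y - h x y * Bx x y * By x y)
    (fun x y => h x y * vy x y ^ 2 - h x y * By x y ^ 2 + g * h x y ^ 2 / 2) x y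
  induction_x : HasDerivAt (fun y' => h x y' * (vy x y' * Bx x y' - By x y' * vx x y')) 0 y
  induction_y : HasDerivAt (fun x' => h x' y * (vx x' y * By x' y - Bx x' y * vy x' y)) 0 x
  magnetic_divergence :
    HasZeroDivergenceAt (fun x y => h x y * Bx x y) (fun x y => h x y * By x y) x y

/-- The depth of the vortex as a function of the squared radius `s = x² + y²`. -/
def vortexDepthProfile (g vmax Bmax hmax s : ℝ) : ℝ :=
  hmax - (vmax ^ 2 - Bmax ^ 2) * Real.exp (1 - s) / (2 * g)

/-- The common profile of velocity (`c = vmax`) and magnetic field (`c = Bmax`): the coefficient of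
the rotation field `(-y, x)` as a function of the squared radius `s = x² + y²`. -/
def vortexSwirlProfile (c s : ℝ) : ℝ := c * Real.exp ((1 - s) / 2)

section ZeroDivergence

variable {F G : ℝ → ℝ → ℝ} {x y : ℝ}

lemma HasZeroDivergenceAt.deriv_add_deriv_eq_zero (hFG : HasZeroDivergenceAt F G x y) :
    deriv (fun x' => F x' y) x + deriv (fun y' => G x y') y = 0 := by
  obtain ⟨d, hF, hG⟩ := hFG
  rw [hF.deriv, hG.deriv, add_neg_cancel]

lemma HasZeroDivergenceAt.swap (hFG : HasZeroDivergenceAt F G x y) :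
    HasZeroDivergenceAt (fun x y => G y x) (fun x y => F y x) y x := by
  obtain ⟨d, hF, hG⟩ := hFG
  exact ⟨-d, hG, by rwa [neg_neg]⟩

end ZeroDivergence

section RadialProfiles

variable {f w p : ℝ → ℝ} {f' p' x y : ℝ}

lemma hasDerivAt_radial_fst (hf : HasDerivAt f f' (x ^ 2 + y ^ 2)) :
    HasDerivAt (fun x' => f (x' ^ 2 + y ^ 2)) (f' * (2 * x)) x := by
  have hs : HasDerivAt (fun x' => x' ^ 2 + y ^ 2) (2 * x) x := by
    simpa using (hasDerivAt_pow 2 x).add_const (y ^ 2)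
  exact hf.comp x hs

lemma hasDerivAt_radial_snd (hf : HasDerivAt f f' (x ^ 2 + y ^ 2)) :
    HasDerivAt (fun y' => f (x ^ 2 + y' ^ 2)) (f' * (2 * y)) y := by
  simp only [add_comm (x ^ 2)] at hf ⊢
  exact hasDerivAt_radial_fst hf

lemma hasZeroDivergenceAt_swirl (hf : DifferentiableAt ℝ f (x ^ 2 + y ^ 2)) :
    HasZeroDivergenceAt (fun x y => f (x ^ 2 + y ^ 2) * -y) (fun x y => f (x ^ 2 + y ^ 2) * x)
      x y := by
  refine ⟨_, (hasDerivAt_radial_fst hf.hasDerivAt).mul_const (-y), ?_⟩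
  exact ((hasDerivAt_radial_snd hf.hasDerivAt).mul_const x).congr_deriv (by ring)

lemma hasZeroDivergenceAt_swirl_momentum_fst (hw : DifferentiableAt ℝ w (x ^ 2 + y ^ 2))
    (hp : HasDerivAt p p' (x ^ 2 + y ^ 2)) (balance : 2 * p' = w (x ^ 2 + y ^ 2)) :
    HasZeroDivergenceAt (fun x y => w (x ^ 2 + y ^ 2) * y ^ 2 + p (x ^ 2 + y ^ 2))
      (fun x y => -(w (x ^ 2 + y ^ 2) * (x * y))) x y := by
  have hxy : HasDerivAt (fun y' => x * y') x y := by
    simpa using (hasDerivAt_id y).const_mul x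
  refine ⟨_, ((hasDerivAt_radial_fst hw.hasDerivAt).mul_const (y ^ 2)).add
    (hasDerivAt_radial_fst hp), ?_⟩
  refine ((hasDerivAt_radial_snd hw.hasDerivAt).mul hxy).neg.congr_deriv ?_
  linear_combination x * balance

lemma hasZeroDivergenceAt_swirl_momentum_snd (hw : DifferentiableAt ℝ w (x ^ 2 + y ^ 2))
    (hp : HasDerivAt p p' (x ^ 2 + y ^ 2)) (balance : 2 * p' = w (x ^ 2 + y ^ 2)) :
    HasZeroDivergenceAt (fun x y => -(w (x ^ 2 + y ^ 2) * (x * y)))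
      (fun x y => w (x ^ 2 + y ^ 2) * x ^ 2 + p (x ^ 2 + y ^ 2)) x y := by
  rw [add_comm] at hw hp balance
  simpa only [add_comm, mul_comm] using
    (hasZeroDivergenceAt_swirl_momentum_fst hw hp balance).swap

end RadialProfiles

theorem vortex_is_steady_solution_general {g H' x y : ℝ} {H a b : ℝ → ℝ}
    (hH : HasDerivAt H H' (x ^ 2 + y ^ 2)) (ha : DifferentiableAt ℝ a (x ^ 2 + y ^ 2))
    (hb : DifferentiableAt ℝ b (x ^ 2 + y ^ 2))
    (balance : 2 * g * H' = a (x ^ 2 + y ^ 2) ^ 2 - b (x ^ 2 + y ^ 2) ^ 2) :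
    IsSteadyShallowWaterMHDAt g (fun x y => H (x ^ 2 + y ^ 2))
      (fun x y => a (x ^ 2 + y ^ 2) * -y) (fun x y => a (x ^ 2 + y ^ 2) * x)
      (fun x y => b (x ^ 2 + y ^ 2) * -y) (fun x y => b (x ^ 2 + y ^ 2) * x) x y := by
  have hw : DifferentiableAt ℝ (fun s => H s * (a s ^ 2 - b s ^ 2)) (x ^ 2 + y ^ 2) :=
    hH.differentiableAt.fun_mul ((ha.fun_pow 2).fun_sub (hb.fun_pow 2))
  have hp : HasDerivAt (fun s => g * H s ^ 2 / 2) (g * H (x ^ 2 + y ^ 2) * H') (x ^ 2 + y ^ 2) :=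
    (((hH.fun_pow 2).const_mul g).div_const 2).congr_deriv (by push_cast; ring)
  have pressure_balance : 2 * (g * H (x ^ 2 + y ^ 2) * H') =
      H (x ^ 2 + y ^ 2) * (a (x ^ 2 + y ^ 2) ^ 2 - b (x ^ 2 + y ^ 2) ^ 2) := by
    linear_combination H (x ^ 2 + y ^ 2) * balance
  exact
    { mass := by
        simpa only [mul_assoc] using hasZeroDivergenceAt_swirl (hH.differentiableAt.fun_mul ha)
      momentum_x := by
        convert hasZeroDivergenceAt_swirl_momentum_fst hw hp pressure_balance using 3 <;> ring
      momentum_y := by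
        convert hasZeroDivergenceAt_swirl_momentum_snd hw hp pressure_balance using 3 <;> ring
      induction_x := by
        refine (hasDerivAt_const y 0).congr_of_eventuallyEq (.of_forall fun y' => ?_)
        ring
      induction_y := by
        refine (hasDerivAt_const x 0).congr_of_eventuallyEq (.of_forall fun x' => ?_)
        ring
      magnetic_divergence := by
        simpa only [mul_assoc] using hasZeroDivergenceAt_swirl (hH.differentiableAt.fun_mul hb) }

section VortexProfiles

lemma vH_eq_vortexDepthProfile (g vmax Bmax hmax : ℝ) :
    vH g vmax Bmax hmax = fun x y => vortexDepthProfile g vmax Bmax hmax (x ^ 2 + y ^ 2) := by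
  simp only [funext_iff, vH, vortexDepthProfile, sub_sub, implies_true]

lemma vVX_eq_vortexSwirlProfile (c : ℝ) :
    vVX c = fun x y => vortexSwirlProfile c (x ^ 2 + y ^ 2) * -y := by
  simp only [funext_iff, vVX, vortexSwirlProfile, sub_sub, implies_true]

lemma vVY_eq_vortexSwirlProfile (c : ℝ) :
    vVY c = fun x y => vortexSwirlProfile c (x ^ 2 + y ^ 2) * x := by
  simp only [funext_iff, vVY, vortexSwirlProfile, sub_sub, implies_true]

lemma vBX_eq_vVX : vBX = vVX := rfl

lemma vBY_eq_vVY : vBY = vVY := rfl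

lemma hasDerivAt_vortexDepthProfile (g vmax Bmax hmax s : ℝ) :
    HasDerivAt (vortexDepthProfile g vmax Bmax hmax)
      ((vmax ^ 2 - Bmax ^ 2) * Real.exp (1 - s) / (2 * g)) s :=
  (((((hasDerivAt_id s).const_sub 1).exp.const_mul (vmax ^ 2 - Bmax ^ 2)).div_const
    (2 * g)).const_sub hmax).congr_deriv (by simp only [id]; ring)

lemma differentiable_vortexSwirlProfile (c : ℝ) : Differentiable ℝ (vortexSwirlProfile c) := by
  unfold vortexSwirlProfile
  fun_prop

lemma vortexSwirlProfile_sq (c s : ℝ) : vortexSwirlProfile c s ^ 2 = c ^ 2 * Real.exp (1 - s) := by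
  rw [vortexSwirlProfile, mul_pow, ← Real.exp_nat_mul, Nat.cast_ofNat,
    mul_div_cancel₀ _ two_ne_zero]

lemma vortexDepthProfile_balance {g : ℝ} (hg : g ≠ 0) (vmax Bmax s : ℝ) :
    2 * g * ((vmax ^ 2 - Bmax ^ 2) * Real.exp (1 - s) / (2 * g)) =
      vortexSwirlProfile vmax s ^ 2 - vortexSwirlProfile Bmax s ^ 2 := by
  rw [mul_div_cancel₀ _ (mul_ne_zero two_ne_zero hg), vortexSwirlProfile_sq,
    vortexSwirlProfile_sq, sub_mul]

lemma isSteadyShallowWaterMHDAt_vortex {g : ℝ} (hg : g ≠ 0) (vmax Bmax hmax x y : ℝ) :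
    IsSteadyShallowWaterMHDAt g (vH g vmax Bmax hmax) (vVX vmax) (vVY vmax) (vBX Bmax) (vBY Bmax)
      x y := by
  rw [vBX_eq_vVX, vBY_eq_vVY, vH_eq_vortexDepthProfile]
  simp only [vVX_eq_vortexSwirlProfile, vVY_eq_vortexSwirlProfile]
  exact vortex_is_steady_solution_general (hasDerivAt_vortexDepthProfile g vmax Bmax hmax _)
    (differentiable_vortexSwirlProfile vmax _) (differentiable_vortexSwirlProfile Bmax _)
    (vortexDepthProfile_balance hg vmax Bmax _)

end VortexProfiles

/-- the vortex is an exact steady solution of the 2D shallow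
water MHD equations with flat bottom, and it satisfies the divergence-free
condition. -/
theorem vortex_is_steady_solution (g vmax Bmax hmax : ℝ) (hg : 0 < g) :
    ∀ x y : ℝ,
      (deriv (fun x' => vH g vmax Bmax hmax x' y * vVX vmax x' y) x
        + deriv (fun y' => vH g vmax Bmax hmax x y' * vVY vmax x y') y = 0)
      ∧ (deriv (fun x' => vH g vmax Bmax hmax x' y * vVX vmax x' y ^ 2
            - vH g vmax Bmax hmax x' y * vBX Bmax x' y ^ 2
            + g * vH g vmax Bmax hmax x' y ^ 2 / 2) x
          + deriv (fun y' => vH g vmax Bmax hmax x y' * vVX vmax x y' * vVY vmax x y'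
            - vH g vmax Bmax hmax x y' * vBX Bmax x y' * vBY Bmax x y') y = 0)
      ∧ (deriv (fun x' => vH g vmax Bmax hmax x' y * vVX vmax x' y * vVY vmax x' y
            - vH g vmax Bmax hmax x' y * vBX Bmax x' y * vBY Bmax x' y) x
          + deriv (fun y' => vH g vmax Bmax hmax x y' * vVY vmax x y' ^ 2
            - vH g vmax Bmax hmax x y' * vBY Bmax x y' ^ 2
            + g * vH g vmax Bmax hmax x y' ^ 2 / 2) y = 0)
      ∧ (deriv (fun y' => vH g vmax Bmax hmax x y' *
            (vVY vmax x y' * vBX Bmax x y' - vBY Bmax x y' * vVX vmax x y')) y = 0)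
      ∧ (deriv (fun x' => vH g vmax Bmax hmax x' y *
            (vVX vmax x' y * vBY Bmax x' y - vBX Bmax x' y * vVY vmax x' y)) x = 0)
      ∧ (deriv (fun x' => vH g vmax Bmax hmax x' y * vBX Bmax x' y) x
          + deriv (fun y' => vH g vmax Bmax hmax x y' * vBY Bmax x y') y = 0) := by
  intro x y
  have steady := isSteadyShallowWaterMHDAt_vortex hg.ne' vmax Bmax hmax x y
  exact ⟨steady.mass.deriv_add_deriv_eq_zero, steady.momentum_x.deriv_add_deriv_eq_zero,
    steady.momentum_y.deriv_add_deriv_eq_zero, steady.induction_x.deriv,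
    steady.induction_y.deriv, steady.magnetic_divergence.deriv_add_deriv_eq_zero⟩
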